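/- arXiv:2212.07260 — 11 statements merged into one kernel-verified Lean document; each statement's English description precedes it below -/
import Mathlib

section
/- Let I and J be ideals on a countably infinite set M such that I is tall and J is nowhere tall. Then I and J are orthogonal if and only if I ⊆↾ J. -/
open Set

/-- An ideal on an (infinite) set: contains all finite sets, is proper,
closed under subsets and finite unions. -/
def IsIdeal {α : Type*} (I : Set (Set α)) : Prop :=
  (∀ s : Set α, s.Finite → s ∈ I) ∧ (Set.univ : Set α) ∉ I ∧
  (∀ s t : Set α, s ∈ I → t ⊆ s → t ∈ I) ∧
  (∀ s t : Set α, s ∈ I → t ∈ I → s ∪ t ∈ I)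

/-- `I` is a `P(J)`-ideal. -/
def IsPJIdeal {α : Type*} (I J : Set (Set α)) : Prop :=
  ∀ f : ℕ → Set α, (∀ n, f n ∈ I) → ∃ A ∈ I, ∀ n, f n \ A ∈ J

/-- Orthogonality of two ideals. -/
def Orth {α : Type*} (I J : Set (Set α)) : Prop :=
  ∃ A : Set α, A ∈ I ∧ Aᶜ ∈ J

/-- `I ⊆↾ J` : the whole ideal `I` has a `J`-union in `I`. -/
def SubRestr {α : Type*} (I J : Set (Set α)) : Prop :=
  ∃ E ∈ I, ∀ A ∈ I, A \ E ∈ J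

/-- A tall ideal. -/
def IsTall {α : Type*} (I : Set (Set α)) : Prop :=
  ∀ X : Set α, X.Infinite → ∃ A ∈ I, (X ∩ A).Infinite

/-- A nowhere tall ideal. -/
def NowhereTall {α : Type*} (J : Set (Set α)) : Prop :=
  ∀ A : Set α, A ∉ J → ∃ B ⊆ A, B.Infinite ∧
    (fun j => j ∩ B) '' J = {s : Set α | s ⊆ B ∧ s.Finite}

/-- An almost disjoint family: infinite members, pairwise finite intersections. -/
def IsADFamily {α : Type*} (C : Set (Set α)) : Prop :=
  (∀ A ∈ C, A.Infinite) ∧ ∀ A ∈ C, ∀ B ∈ C, A ≠ B → (A ∩ B).Finite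

/-- The ideal generated by a family `C` (together with the finite sets). -/
def genIdeal {α : Type*} (C : Set (Set α)) : Set (Set α) :=
  {A | ∃ F : Finset (Set α), ↑F ⊆ C ∧ (A \ ⋃₀ ↑F).Finite}

/-!
The complement of a witness `E` for `I ⊆↾ J` meets every member of `I` in a member of `J`. If it
were not in `J`, it would contain an infinite set `B` meeting every member of `J`, hence every
member of `I`, in a finite set, contradicting tallness of `I`. Conversely, `A \ E ⊆ Eᶜ`, and
nowhere tallness makes `J` closed under subsets: a non-member `X ⊆ S ∈ J` would contain an infinite
`B` with `S ∩ B = B` finite.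
-/

section

variable {α : Type*} {I J : Set (Set α)}

theorem NowhereTall.exists_infinite_subset_forall_inter_finite (hJ : NowhereTall J) {X : Set α}
    (hX : X ∉ J) : ∃ B ⊆ X, B.Infinite ∧ ∀ S ∈ J, (S ∩ B).Finite := by
  obtain ⟨B, hBX, hB_inf, hJB⟩ := hJ X hX
  exact ⟨B, hBX, hB_inf, fun S hS => (hJB.subset (mem_image_of_mem _ hS)).2⟩

theorem NowhereTall.isLowerSet (hJ : NowhereTall J) : IsLowerSet J := by
  intro S X hXS hS
  by_contra hX
  obtain ⟨B, hBX, hB_inf, hB_fin⟩ := hJ.exists_infinite_subset_forall_inter_finite hX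
  have hSB : S ∩ B = B := inter_eq_right.mpr (hBX.trans hXS)
  exact hB_inf (hSB ▸ hB_fin S hS)

theorem NowhereTall.mem_of_isTall_of_forall_inter_mem (hJ : NowhereTall J) (hI : IsTall I)
    {X : Set α} (hX : ∀ A ∈ I, A ∩ X ∈ J) : X ∈ J := by
  by_contra hXJ
  obtain ⟨B, hBX, hB_inf, hB_fin⟩ := hJ.exists_infinite_subset_forall_inter_finite hXJ
  obtain ⟨A, hA, hBA_inf⟩ := hI B hB_inf
  have hAXB : A ∩ X ∩ B = B ∩ A := by
    rw [inter_assoc, inter_eq_right.mpr hBX, inter_comm]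
  exact hBA_inf (hAXB ▸ hB_fin (A ∩ X) (hX A hA))

theorem Orth.subRestr (h : Orth I J) (hJ : IsLowerSet J) : SubRestr I J := by
  obtain ⟨E, hE, hEc⟩ := h
  exact ⟨E, hE, fun A _ => hJ (sdiff_subset_compl A E) hEc⟩

theorem SubRestr.orth (h : SubRestr I J) (hI : IsTall I) (hJ : NowhereTall J) : Orth I J := by
  obtain ⟨E, hE, hdiff⟩ := h
  exact ⟨E, hE, hJ.mem_of_isTall_of_forall_inter_mem hI hdiff⟩

theorem stmt2_general (hI : IsTall I) (hJ : NowhereTall J) : Orth I J ↔ SubRestr I J :=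
  ⟨fun h => h.subRestr hJ.isLowerSet, fun h => h.orth hI hJ⟩

end

theorem stmt2 {α : Type*} [Countable α] [Infinite α]
    (I J : Set (Set α)) (hI : IsIdeal I) (hJ : IsIdeal J)
    (htall : IsTall I) (hnt : NowhereTall J) :
    Orth I J ↔ SubRestr I J :=
  stmt2_general htall hnt
end

section
/- Let J be an ideal on a countably infinite set M and let I₁, I₂ be ideals on M that are not orthogonal and satisfy I₁ ∩ I₂ ⊆ J. Then I₁ and I₂ are both P(J)-ideals if and only if I₁ ∨ I₂ = {A ∪ B : A ∈ I₁, B ∈ I₂} is a P(J)-ideal. -/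
open Set

open scoped SetFamily

namespace IsIdeal

variable {α : Type*} {I : Set (Set α)}

theorem isLowerSet (hI : IsIdeal I) : IsLowerSet I :=
  fun s t hts hs => hI.2.2.1 s t hs hts

theorem supClosed (hI : IsIdeal I) : SupClosed I :=
  fun s hs t ht => hI.2.2.2 s t hs ht

theorem nonempty (hI : IsIdeal I) : I.Nonempty :=
  ⟨∅, hI.1 ∅ finite_empty⟩

end IsIdeal

theorem sups_eq_ofPred_union {α : Type*} (I₁ I₂ : Set (Set α)) :
    I₁ ⊻ I₂ = {X | ∃ A ∈ I₁, ∃ B ∈ I₂, X = A ∪ B} := by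
  ext X
  simp only [mem_sups, mem_ofPred_eq, eq_comm, sup_eq_union]

theorem subset_sups_left_of_bot_mem {β : Type*} [SemilatticeSup β] [OrderBot β] {s t : Set β}
    (ht : ⊥ ∈ t) : s ⊆ s ⊻ t :=
  fun a ha => mem_sups.2 ⟨a, ha, ⊥, ht, sup_bot_eq a⟩

namespace IsPJIdeal

variable {α : Type*} {I₁ I₂ J : Set (Set α)}

theorem sups (hJ : IsLowerSet J) (hJ_sup : SupClosed J)
    (h₁ : IsPJIdeal I₁ J) (h₂ : IsPJIdeal I₂ J) : IsPJIdeal (I₁ ⊻ I₂) J := by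
  intro f hf
  choose a ha b hb hab using fun n => mem_sups.1 (hf n)
  obtain ⟨A, hA, haA⟩ := h₁ a ha
  obtain ⟨B, hB, hbB⟩ := h₂ b hb
  refine ⟨A ∪ B, sup_mem_sups hA hB, fun n => ?_⟩
  have hcover : f n \ (A ∪ B) ⊆ a n \ A ∪ b n \ B := by
    rw [← hab n, sup_sdiff]
    exact sup_le_sup (sdiff_le_sdiff_left le_sup_left) (sdiff_le_sdiff_left le_sup_right)
  exact hJ hcover (hJ_sup (haA n) (hbB n))

theorem of_sups_left (hI₁ : IsLowerSet I₁) (hI₂ : IsLowerSet I₂) (hI₂_ne : I₂.Nonempty)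
    (hJ : IsLowerSet J) (hJ_sup : SupClosed J) (hsub : I₁ ∩ I₂ ⊆ J)
    (h : IsPJIdeal (I₁ ⊻ I₂) J) : IsPJIdeal I₁ J := by
  intro f hf
  have hf_sups : ∀ n, f n ∈ I₁ ⊻ I₂ :=
    fun n => subset_sups_left_of_bot_mem (hI₂.bot_mem.2 hI₂_ne) (hf n)
  obtain ⟨_, ⟨A, hA, B, hB, rfl⟩, hfAB⟩ := h f hf_sups
  refine ⟨A, hA, fun n => ?_⟩
  -- Dropping `B` from the bound `A ∪ B` only loses a set of `I₁ ∩ I₂`.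
  have hfB : f n ∩ B ∈ J :=
    hsub ⟨hI₁ inter_subset_left (hf n), hI₂ inter_subset_right hB⟩
  have hcover : f n \ A ⊆ f n \ (A ∪ B) ∪ f n ∩ B := by grind
  exact hJ hcover (hJ_sup (hfAB n) hfB)

theorem of_sups_right (hI₁ : IsLowerSet I₁) (hI₂ : IsLowerSet I₂) (hI₁_ne : I₁.Nonempty)
    (hJ : IsLowerSet J) (hJ_sup : SupClosed J) (hsub : I₁ ∩ I₂ ⊆ J)
    (h : IsPJIdeal (I₁ ⊻ I₂) J) : IsPJIdeal I₂ J :=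
  of_sups_left hI₂ hI₁ hI₁_ne hJ hJ_sup (inter_comm I₁ I₂ ▸ hsub) (sups_comm I₁ I₂ ▸ h)

end IsPJIdeal

theorem stmt3_general {α : Type*} {I₁ I₂ J : Set (Set α)}
    (hI₁ : IsLowerSet I₁) (hI₁_ne : I₁.Nonempty) (hI₂ : IsLowerSet I₂) (hI₂_ne : I₂.Nonempty)
    (hJ : IsLowerSet J) (hJ_sup : SupClosed J) (hsub : I₁ ∩ I₂ ⊆ J) :
    (IsPJIdeal I₁ J ∧ IsPJIdeal I₂ J) ↔ IsPJIdeal (I₁ ⊻ I₂) J :=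
  ⟨fun ⟨h₁, h₂⟩ => h₁.sups hJ hJ_sup h₂, fun h =>
    ⟨h.of_sups_left hI₁ hI₂ hI₂_ne hJ hJ_sup hsub, h.of_sups_right hI₁ hI₂ hI₁_ne hJ hJ_sup hsub⟩⟩

theorem stmt3 {α : Type*} [Countable α] [Infinite α]
    (I₁ I₂ J : Set (Set α)) (hI₁ : IsIdeal I₁) (hI₂ : IsIdeal I₂) (hJ : IsIdeal J)
    (hno : ¬ Orth I₁ I₂) (hsub : I₁ ∩ I₂ ⊆ J) :
    (IsPJIdeal I₁ J ∧ IsPJIdeal I₂ J) ↔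
      IsPJIdeal {X | ∃ A ∈ I₁, ∃ B ∈ I₂, X = A ∪ B} J :=
  sups_eq_ofPred_union I₁ I₂ ▸ stmt3_general hI₁.isLowerSet hI₁.nonempty hI₂.isLowerSet
    hI₂.nonempty hJ.isLowerSet hJ.supClosed hsub
end

section
/- Let I₁, I₂ be ideals on a countably infinite set M that are not orthogonal, and suppose I₂ is a P(I₁)-ideal. Then I₁ ∨ I₂ = {A ∪ B : A ∈ I₁, B ∈ I₂} is a P(I₁)-ideal. -/
open Set

theorem IsIdeal.isLowerSet_s4 {α : Type*} {I : Set (Set α)} (hI : IsIdeal I) : IsLowerSet I :=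
  fun s t hts hs => hI.2.2.1 s t hs hts

theorem IsIdeal.supClosed_s4 {α : Type*} {I : Set (Set α)} (hI : IsIdeal I) : SupClosed I :=
  fun s hs t ht => hI.2.2.2 s t hs ht

theorem stmt4_general {α : Type*} {I₁ I₂ J : Set (Set α)} (hJ_lower : IsLowerSet J)
    (hJ_sup : SupClosed J) (hI₁J : I₁ ⊆ J) (hP : IsPJIdeal I₂ J) :
    IsPJIdeal {X | ∃ A ∈ I₁, ∃ B ∈ I₂, X = A ∪ B} J := by
  intro f hf
  choose A hA B hB hf_eq using hf
  obtain ⟨C, hC, hBC⟩ := hP B hB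
  -- The summand `A 0` only serves to put the witness into the join.
  refine ⟨A 0 ∪ C, ⟨A 0, hA 0, C, hC, rfl⟩, fun n => ?_⟩
  have f_sdiff_subset : f n \ (A 0 ∪ C) ⊆ A n ∪ B n \ C :=
    calc f n \ (A 0 ∪ C)
      _ ⊆ f n \ C := sdiff_subset_sdiff_right subset_union_right
      _ = A n \ C ∪ B n \ C := by rw [hf_eq n, union_sdiff_distrib]
      _ ⊆ A n ∪ B n \ C := union_subset_union_left _ sdiff_subset
  exact hJ_lower f_sdiff_subset (hJ_sup (hI₁J (hA n)) (hBC n))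

theorem stmt4 {α : Type*} [Countable α] [Infinite α]
    (I₁ I₂ : Set (Set α)) (hI₁ : IsIdeal I₁) (hI₂ : IsIdeal I₂)
    (hno : ¬ Orth I₁ I₂) (hP : IsPJIdeal I₂ I₁) :
    IsPJIdeal {X | ∃ A ∈ I₁, ∃ B ∈ I₂, X = A ∪ B} I₁ :=
  stmt4_general hI₁.isLowerSet_s4 hI₁.supClosed_s4 Subset.rfl hP
end

section
/- Let M and N be countably infinite sets, let I be an ideal on M that is not tall, and let J be an ideal on N with J ≠ Fin (i.e., J contains some infinite set). Then there exists a bijection f : M → N such that f[A] ∈ J for every A ∈ I. -/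
open Set

/-!
Some infinite `X ⊆ M` meets every member of `I` in a finite set; halving `X`, we may assume that
`Xᶜ` is infinite too. Let `Y ∈ J` be infinite; its complement is infinite because `J` is proper. A
bijection `f` carrying `X` onto `Yᶜ` maps each `A ∈ I` into `Y` up to the finite set `f '' (X ∩ A)`.
-/

theorem exists_subset_infinite_compl_infinite {α : Type*} {s : Set α} (hs : s.Infinite) :
    ∃ t ⊆ s, t.Infinite ∧ tᶜ.Infinite := by
  obtain ⟨t, u, htu, hdisj, hcard⟩ := hs.exists_union_disjoint_cardinal_eq_of_infinite
  obtain ⟨e⟩ : Nonempty (t ≃ u) := Cardinal.eq.mp hcard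
  have htu_inf : t.Infinite ↔ u.Infinite := by
    simpa only [infinite_coe_iff] using e.infinite_iff
  have ht : t.Infinite := by
    rcases infinite_union.mp (htu ▸ hs) with ht | hu
    exacts [ht, htu_inf.mpr hu]
  exact ⟨t, htu ▸ subset_union_left, ht, (htu_inf.mp ht).mono hdisj.subset_compl_left⟩

theorem exists_equiv_image_eq {α β : Type*} {s : Set α} {t : Set β} (e : s ≃ t)
    (e' : (sᶜ : Set α) ≃ (tᶜ : Set β)) : ∃ f : α ≃ β, f '' s = t := by
  classical
  let f : α ≃ β :=
    (Equiv.Set.sumCompl s).symm.trans ((Equiv.sumCongr e e').trans (Equiv.Set.sumCompl t))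
  have mapsTo : MapsTo f s t := fun x hx ↦ by
    simp [f, Equiv.Set.sumCompl_symm_apply_of_mem hx]
  have mapsTo_compl : MapsTo f sᶜ tᶜ := fun x hx ↦ by
    simp [f, Equiv.Set.sumCompl_symm_apply_of_notMem hx]
  refine ⟨f, mapsTo.image_subset.antisymm fun y hy ↦ ?_⟩
  obtain ⟨x, rfl⟩ := f.surjective y
  exact mem_image_of_mem f (not_not.mp fun hx ↦ mapsTo_compl hx hy)

theorem exists_equiv_image_eq_of_infinite {α β : Type*} [Countable α] [Countable β]
    {s : Set α} {t : Set β} (hs : s.Infinite) (hsc : sᶜ.Infinite) (ht : t.Infinite)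
    (htc : tᶜ.Infinite) : ∃ f : α ≃ β, f '' s = t := by
  have := hs.to_subtype
  have := hsc.to_subtype
  have := ht.to_subtype
  have := htc.to_subtype
  exact exists_equiv_image_eq nonempty_equiv_of_countable.some nonempty_equiv_of_countable.some

theorem exists_infinite_forall_inter_finite_of_not_isTall {α : Type*} {I : Set (Set α)}
    (hI : ¬ IsTall I) : ∃ X : Set α, X.Infinite ∧ ∀ A ∈ I, (X ∩ A).Finite := by
  simpa only [IsTall, not_forall, not_exists, not_and, not_infinite, exists_prop] using hI

namespace IsIdeal

variable {α : Type*} {J : Set (Set α)} {s t : Set α}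

theorem compl_infinite (hJ : IsIdeal J) (hs : s ∈ J) : sᶜ.Infinite := by
  obtain ⟨finite_mem, univ_notMem, -, union_mem⟩ := hJ
  intro hsc
  exact univ_notMem (union_compl_self s ▸ union_mem s sᶜ hs (finite_mem sᶜ hsc))

theorem mem_of_sdiff_finite (hJ : IsIdeal J) (ht : t ∈ J) (hst : (s \ t).Finite) : s ∈ J := by
  obtain ⟨finite_mem, -, subset_mem, union_mem⟩ := hJ
  exact subset_mem _ s (union_mem t _ ht (finite_mem _ hst)) (sdiff_subset_iff.mp subset_rfl)

end IsIdeal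

theorem stmt5_general {M N : Type*} [Countable M] [Countable N]
    (I : Set (Set M)) (J : Set (Set N)) (hJ : IsIdeal J)
    (hnt : ¬ IsTall I) (hJne : ∃ X ∈ J, X.Infinite) :
    ∃ f : M ≃ N, ∀ A ∈ I, f '' A ∈ J := by
  obtain ⟨X, hX, hXI⟩ := exists_infinite_forall_inter_finite_of_not_isTall hnt
  obtain ⟨Z, hZX, hZ, hZc⟩ := exists_subset_infinite_compl_infinite hX
  obtain ⟨Y, hYJ, hY⟩ := hJne
  obtain ⟨f, hf⟩ : ∃ f : M ≃ N, f '' Z = Yᶜ :=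
    exists_equiv_image_eq_of_infinite hZ hZc (hJ.compl_infinite hYJ) ((compl_compl Y).symm ▸ hY)
  refine ⟨f, fun A hA ↦ hJ.mem_of_sdiff_finite hYJ ?_⟩
  have image_sdiff : f '' A \ Y = f '' (A ∩ Z) := by
    rw [sdiff_eq, ← hf, image_inter f.injective]
  have inter_finite : (A ∩ Z).Finite :=
    (hXI A hA).subset fun _ hx ↦ ⟨hZX hx.2, hx.1⟩
  exact image_sdiff ▸ inter_finite.image f

theorem stmt5 {M N : Type*} [Countable M] [Infinite M] [Countable N] [Infinite N]
    (I : Set (Set M)) (J : Set (Set N)) (hI : IsIdeal I) (hJ : IsIdeal J)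
    (hnt : ¬ IsTall I) (hJne : ∃ X ∈ J, X.Infinite) :
    ∃ f : M ≃ N, ∀ A ∈ I, f '' A ∈ J :=
  stmt5_general I J hJ hnt hJne
end

section
/- Let J be an ideal on a countably infinite set M and let C be an infinite almost disjoint family of subsets of M whose union is coinfinite or whose generated family ⟨C⟩ is a proper ideal (for an infinite AD family, ⟨C⟩ = {A ⊆ M : A \ ⋃C' is finite for some finite C' ⊆ C} is always a proper ideal containing Fin). Then the following are equivalent: (1) ⟨C⟩ is a P(J)-ideal; (2) the family {C ∈ C : C ∉ J} is finite; (3) ⟨C⟩ ⊆↾ J. -/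
open Set

/-!
A set `A ∈ genIdeal C` is covered, up to a finite set, by finitely many members of `C`, so it meets
every other member of `C` in a set of `J`. Hence, modulo `J`, it contains only finitely many members
of `C` outside `J`. Conversely, if only finitely many members of `C` are outside `J`, then their
union contains every set of `genIdeal C` modulo `J`.
-/

section

variable {α : Type*} {I J C : Set (Set α)}

namespace IsIdeal

lemma mem_of_finite (hJ : IsIdeal J) {s : Set α} (hs : s.Finite) : s ∈ J :=
  hJ.1 s hs

lemma mem_of_subset (hJ : IsIdeal J) {s t : Set α} (ht : t ∈ J) (hst : s ⊆ t) : s ∈ J :=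
  hJ.2.2.1 t s ht hst

lemma union_mem (hJ : IsIdeal J) {s t : Set α} (hs : s ∈ J) (ht : t ∈ J) : s ∪ t ∈ J :=
  hJ.2.2.2 s t hs ht

lemma biUnion_mem (hJ : IsIdeal J) {ι : Type*} {s : Set ι} (hs : s.Finite) {f : ι → Set α}
    (hf : ∀ i ∈ s, f i ∈ J) : ⋃ i ∈ s, f i ∈ J := by
  induction s, hs using Set.Finite.induction_on with
  | empty => simpa using hJ.mem_of_finite finite_empty
  | insert _ _ ih =>
    rw [biUnion_insert]
    exact hJ.union_mem (hf _ (mem_insert _ _)) (ih fun i hi => hf i (mem_insert_of_mem _ hi))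

lemma mem_of_inter_mem_of_diff_mem (hJ : IsIdeal J) {s t : Set α} (hinter : s ∩ t ∈ J)
    (hdiff : s \ t ∈ J) : s ∈ J := by
  simpa only [inter_union_sdiff] using hJ.union_mem hinter hdiff

lemma inter_mem_of_diff_sUnion_mem (hJ : IsIdeal J) {F : Set (Set α)} (hF : F.Finite)
    {A B : Set α} (hA : A \ ⋃₀ F ∈ J) (hB : ∀ c ∈ F, B ∩ c ∈ J) : B ∩ A ∈ J := by
  have hBF : B ∩ ⋃₀ F ∈ J := by
    rw [sUnion_eq_biUnion, inter_iUnion₂]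
    exact hJ.biUnion_mem hF hB
  refine hJ.mem_of_inter_mem_of_diff_mem (t := ⋃₀ F) ?_ ?_
  · exact hJ.mem_of_subset hBF (inter_subset_inter_left _ inter_subset_left)
  · exact hJ.mem_of_subset hA (sdiff_subset_sdiff_left inter_subset_right)

end IsIdeal

lemma sUnion_mem_genIdeal {F : Set (Set α)} (hF : F.Finite) (hFC : F ⊆ C) :
    ⋃₀ F ∈ genIdeal C :=
  ⟨hF.toFinset, by simpa using hFC, by simp⟩

lemma subset_genIdeal : C ⊆ genIdeal C := fun c hc => by
  simpa using sUnion_mem_genIdeal (finite_singleton c) (singleton_subset_iff.2 hc)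

lemma diff_mem_of_mem_genIdeal (hJ : IsIdeal J) {A E : Set α} (hE : ∀ c ∈ C, c \ E ∈ J)
    (hA : A ∈ genIdeal C) : A \ E ∈ J := by
  obtain ⟨F, hFC, hAF⟩ := hA
  rw [sdiff_eq, inter_comm]
  refine hJ.inter_mem_of_diff_sUnion_mem F.finite_toSet (hJ.mem_of_finite hAF) fun c hc => ?_
  rw [inter_comm, ← sdiff_eq]
  exact hE c (hFC hc)

lemma finite_inter_notMem_of_mem_genIdeal (hJ : IsIdeal J)
    (hC : C.Pairwise fun c d => c ∩ d ∈ J) {A : Set α} (hA : A ∈ genIdeal C) :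
    {c ∈ C | c ∩ A ∉ J}.Finite := by
  obtain ⟨F, hFC, hAF⟩ := hA
  refine F.finite_toSet.subset fun c ⟨hcC, hcA⟩ => ?_
  by_contra hcF
  refine hcA (hJ.inter_mem_of_diff_sUnion_mem F.finite_toSet (hJ.mem_of_finite hAF) fun d hd => ?_)
  exact hC hcC (hFC hd) (ne_of_mem_of_not_mem hd hcF).symm

lemma finite_notMem_of_isPJIdeal_genIdeal (hJ : IsIdeal J)
    (hC : C.Pairwise fun c d => c ∩ d ∈ J) (hP : IsPJIdeal (genIdeal C) J) :
    {c ∈ C | c ∉ J}.Finite := by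
  by_contra hinf
  let c : ℕ ↪ {c ∈ C | c ∉ J} := Set.Infinite.natEmbedding _ hinf
  obtain ⟨A, hA, hcA⟩ := hP (fun n => c n) fun n => subset_genIdeal (c n).2.1
  have inter_notMem (n : ℕ) : (c n : Set α) ∩ A ∉ J := fun hn =>
    (c n).2.2 (hJ.mem_of_inter_mem_of_diff_mem hn (hcA n))
  refine infinite_of_injective_forall_mem (Subtype.val_injective.comp c.injective) (fun n => ?_)
    (finite_inter_notMem_of_mem_genIdeal hJ hC hA)
  exact ⟨(c n).2.1, inter_notMem n⟩

lemma subRestr_genIdeal_of_finite_notMem (hJ : IsIdeal J) (hfin : {c ∈ C | c ∉ J}.Finite) :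
    SubRestr (genIdeal C) J := by
  refine ⟨⋃₀ {c ∈ C | c ∉ J}, sUnion_mem_genIdeal hfin (sep_subset _ _), fun A hA =>
    diff_mem_of_mem_genIdeal hJ (fun c hc => ?_) hA⟩
  by_cases hcJ : c ∈ J
  · exact hJ.mem_of_subset hcJ sdiff_subset
  · have hsub : c ⊆ ⋃₀ {c ∈ C | c ∉ J} := subset_sUnion_of_mem (mem_sep hc hcJ)
    rw [sdiff_eq_empty.2 hsub]
    exact hJ.mem_of_finite finite_empty

lemma SubRestr.isPJIdeal (h : SubRestr I J) : IsPJIdeal I J := by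
  obtain ⟨E, hE, hIE⟩ := h
  exact fun f hf => ⟨E, hE, fun n => hIE (f n) (hf n)⟩

theorem stmt6_general (hJ : IsIdeal J) (hC : C.Pairwise fun c d => c ∩ d ∈ J) :
    List.TFAE [
      IsPJIdeal (genIdeal C) J,
      {c ∈ C | c ∉ J}.Finite,
      SubRestr (genIdeal C) J
    ] := by
  tfae_have 1 → 2 := finite_notMem_of_isPJIdeal_genIdeal hJ hC
  tfae_have 2 → 3 := subRestr_genIdeal_of_finite_notMem hJ
  tfae_have 3 → 1 := SubRestr.isPJIdeal
  tfae_finish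

end

theorem stmt6 {α : Type*} [Countable α] [Infinite α]
    (J : Set (Set α)) (C : Set (Set α)) (hJ : IsIdeal J)
    (hC : IsADFamily C) (hCinf : C.Infinite) :
    List.TFAE [
      IsPJIdeal (genIdeal C) J,
      {c ∈ C | c ∉ J}.Finite,
      SubRestr (genIdeal C) J
    ] :=
  stmt6_general hJ fun c hc d hd hcd => hJ.mem_of_finite (hC.2 c hc d hd hcd)
end

section
/- Let A = {A_n : n ∈ ℕ} be a partition of ℕ×ℕ into infinitely many infinite sets. The following are equivalent: (1) Fin(A) is a P(Fin×∅)-ideal; (2) for all but finitely many n, A_n ∩ V_m = ∅ holds for all but finitely many m; (3) there exists a cofinite set F ⊆ ℕ such that X ∩ ⋃_{k∈F} A_k ∈ Fin×∅ for every X ∈ Fin(A); (4) A_n ∈ Fin×∅ for all but finitely many n. -/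
open Set

/-- The `n`-th vertical `{n} × ℕ` in `ℕ × ℕ`. -/
def Vert (n : ℕ) : Set (ℕ × ℕ) := {p | p.1 = n}

/-- A partition of `ℕ × ℕ` into infinitely many infinite sets (indexed by `ℕ`). -/
def IsPartition (A : ℕ → Set (ℕ × ℕ)) : Prop :=
  (∀ n, (A n).Infinite) ∧ (∀ i j, i ≠ j → A i ∩ A j = ∅) ∧ (⋃ n, A n) = Set.univ

/-- `Fin(A)`: the ideal generated by the partition `A`. -/
def FinPart (A : ℕ → Set (ℕ × ℕ)) : Set (Set (ℕ × ℕ)) :=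
  {X | ∃ F : Finset ℕ, (X \ ⋃ n ∈ F, A n).Finite}

/-- `OFin(A)`: sets with finite intersection with each member of `A`. -/
def OFinPart (A : ℕ → Set (ℕ × ℕ)) : Set (Set (ℕ × ℕ)) :=
  {X | ∀ n, (X ∩ A n).Finite}

/-- `FinFin(A)`: the ideal generated by `Fin(A) ∪ OFin(A)`. -/
def FinFinPart (A : ℕ → Set (ℕ × ℕ)) : Set (Set (ℕ × ℕ)) :=
  {X | ∃ Y ∈ FinPart A, ∃ Z ∈ OFinPart A, X ⊆ Y ∪ Z}

/-- `Sel(A)`: sets meeting each member of `A` in at most `m` points, for some `m`. -/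
def SelPart (A : ℕ → Set (ℕ × ℕ)) : Set (Set (ℕ × ℕ)) :=
  {X | ∃ m : ℕ, ∀ n, (X ∩ A n).encard ≤ (m : ℕ∞)}

/-- `ED(A)`: sets meeting all but finitely many members of `A` in at most `m` points. -/
def EDPart (A : ℕ → Set (ℕ × ℕ)) : Set (Set (ℕ × ℕ)) :=
  {X | ∃ m : ℕ, {n | (m : ℕ∞) < (X ∩ A n).encard}.Finite}

/-- The ideal `Sel` on `ℕ × ℕ` (w.r.t. the vertical partition). -/
def SelI : Set (Set (ℕ × ℕ)) := SelPart Vert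

/-- The ideal `ED` on `ℕ × ℕ` (w.r.t. the vertical partition). -/
def EDI : Set (Set (ℕ × ℕ)) := EDPart Vert

/-- The ideal `Fin × ∅` on `ℕ × ℕ`, generated by the verticals. -/
def FinVert : Set (Set (ℕ × ℕ)) := FinPart Vert

/-!
Let `J` be an ideal containing the finite sets and `A` a disjoint family. A member `B` of `Fin(A)`
has finite intersection with all but finitely many `A i`; hence if infinitely many `A i` lie outside
`J`, no `B` can absorb all of them modulo `J`. Conversely, if only finitely many `A i` lie outside
`J`, their union absorbs every member of `Fin(A)` modulo `J`. For `J = Fin × ∅`, the verticals being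
disjoint and covering the plane, a set is in `J` exactly when it meets finitely many of them.
-/

open Function

section FinIdeal

variable {ι α : Type*} {A : ι → Set α} {X : Set α}

/-- The ideal `Fin(A)` of sets covered, up to a finite set, by finitely many members of the family
`A`. For families `ℕ → Set (ℕ × ℕ)` its carrier is definitionally `FinPart A`. As an `Order.Ideal`
it is not required to be proper. -/
def finIdeal (A : ι → Set α) : Order.Ideal (Set α) where
  carrier := {X | ∃ F : Finset ι, (X \ ⋃ i ∈ F, A i).Finite}
  lower' := fun _ _ hYX ⟨F, hF⟩ ↦ ⟨F, hF.subset (sdiff_le_sdiff_right hYX)⟩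
  nonempty' := ⟨∅, ∅, by simp⟩
  directed' := by
    classical
    rintro X ⟨F, hF⟩ Y ⟨G, hG⟩
    refine ⟨X ∪ Y, ⟨F ∪ G, (hF.union hG).subset ?_⟩, subset_union_left, subset_union_right⟩
    simp only [Finset.set_biUnion_union, union_sdiff_distrib]
    gcongr
    exacts [subset_union_left, subset_union_right]

theorem mem_finIdeal_of_finite (hX : X.Finite) : X ∈ finIdeal A :=
  ⟨∅, hX.subset sdiff_subset⟩

theorem apply_mem_finIdeal (i : ι) : A i ∈ finIdeal A :=
  ⟨{i}, by simp⟩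

theorem biUnion_mem_finIdeal {s : Set ι} (hs : s.Finite) : ⋃ i ∈ s, A i ∈ finIdeal A :=
  Order.Ideal.biSup_mem hs fun i _ ↦ apply_mem_finIdeal i

theorem finite_setOf_inter_nonempty (hA : Pairwise (Disjoint on A)) (hX : X.Finite) :
    {i | (X ∩ A i).Nonempty}.Finite := by
  have at_most_one_index (x : α) : {i | x ∈ A i}.Subsingleton := fun i hi j hj ↦
    hA.eq (not_disjoint_iff.2 ⟨x, hi, hj⟩)
  refine (hX.biUnion fun x _ ↦ (at_most_one_index x).finite).subset ?_
  rintro i ⟨x, hxX, hxi⟩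
  exact mem_biUnion hxX hxi

theorem disjoint_biUnion_of_notMem (hA : Pairwise (Disjoint on A)) {s : Set ι} {i : ι}
    (hi : i ∉ s) : Disjoint (A i) (⋃ j ∈ s, A j) :=
  disjoint_iUnion₂_right.2 fun _ hj ↦ hA (ne_of_mem_of_not_mem hj hi).symm

theorem mem_finIdeal_iff_finite_setOf_inter_nonempty (hA : Pairwise (Disjoint on A))
    (hcover : ⋃ i, A i = univ) : X ∈ finIdeal A ↔ {i | (X ∩ A i).Nonempty}.Finite := by
  refine ⟨fun ⟨F, hF⟩ ↦ ?_, fun h ↦ ?_⟩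
  · refine (F.finite_toSet.union (finite_setOf_inter_nonempty hA hF)).subset ?_
    rintro i ⟨x, hxX, hxi⟩
    refine or_iff_not_imp_left.2 fun hiF ↦ ⟨x, ⟨hxX, ?_⟩, hxi⟩
    exact (disjoint_biUnion_of_notMem hA hiF).notMem_of_mem_left hxi
  · refine (finIdeal A).lower (fun x hx ↦ ?_) (biUnion_mem_finIdeal h)
    obtain ⟨i, hi⟩ := iUnion_eq_univ_iff.1 hcover x
    exact mem_biUnion (show (X ∩ A i).Nonempty from ⟨x, hx, hi⟩) hi

theorem finite_setOf_infinite_inter (hA : Pairwise (Disjoint on A)) (hX : X ∈ finIdeal A) :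
    {i | (A i ∩ X).Infinite}.Finite := by
  obtain ⟨F, hF⟩ := hX
  refine F.finite_toSet.subset fun i hi ↦ ?_
  by_contra hiF
  refine hi (hF.subset fun x ⟨hxi, hxX⟩ ↦ ⟨hxX, ?_⟩)
  exact (disjoint_biUnion_of_notMem hA hiF).notMem_of_mem_left hxi

section PJIdeal

variable {J : Order.Ideal (Set α)}

theorem finite_setOf_notMem_of_isPJIdeal (hA : Pairwise (Disjoint on A))
    (hJ : ∀ s : Set α, s.Finite → s ∈ J) (h : IsPJIdeal (finIdeal A : Set (Set α)) J) :
    {i | A i ∉ J}.Finite := by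
  by_contra hinf
  let e := Set.Infinite.natEmbedding _ hinf
  obtain ⟨B, hB, hdiff⟩ := h (fun n ↦ A (e n)) fun n ↦ apply_mem_finIdeal _
  have infinite_inter (n : ℕ) : (A (e n) ∩ B).Infinite := fun hfin ↦
    (e n).2 (sdiff_union_inter (A (e n)) B ▸ Order.Ideal.sup_mem (hdiff n) (hJ _ hfin))
  refine infinite_range_of_injective (Subtype.val_injective.comp e.injective) ?_
  exact (finite_setOf_infinite_inter hA hB).subset (range_subset_iff.2 infinite_inter)

theorem inter_biUnion_mem_of_mem_finIdeal (hA : Pairwise (Disjoint on A))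
    (hJ : ∀ s : Set α, s.Finite → s ∈ J) {s : Set ι} (hs : ∀ i ∈ s, A i ∈ J)
    (hX : X ∈ finIdeal A) : X ∩ ⋃ i ∈ s, A i ∈ J := by
  obtain ⟨F, hF⟩ := hX
  have inter_mem : (⋃ i ∈ (F : Set ι), A i) ∩ ⋃ i ∈ s, A i ∈ J := by
    rw [← biUnion_inter_of_pairwise_disjoint hA]
    exact Order.Ideal.biSup_mem (F.finite_toSet.inter_of_left s) fun i hi ↦ hs i hi.2
  refine J.lower (fun x ⟨hxX, hxs⟩ ↦ ?_) (Order.Ideal.sup_mem (hJ _ hF) inter_mem)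
  by_cases hxF : x ∈ ⋃ i ∈ F, A i
  · exact Or.inr ⟨hxF, hxs⟩
  · exact Or.inl ⟨hxX, hxF⟩

theorem isPJIdeal_of_inter_biUnion_mem (hJ : ∀ s : Set α, s.Finite → s ∈ J) {s : Set ι}
    (hs : sᶜ.Finite) (h : ∀ X ∈ finIdeal A, X ∩ ⋃ i ∈ s, A i ∈ J) :
    IsPJIdeal (finIdeal A : Set (Set α)) J := by
  refine fun f hf ↦ ⟨⋃ i ∈ sᶜ, A i, biUnion_mem_finIdeal hs, fun n ↦ ?_⟩
  obtain ⟨F, hF⟩ := hf n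
  refine J.lower (fun x ⟨hxf, hxs⟩ ↦ ?_) (Order.Ideal.sup_mem (hJ _ hF) (h _ (hf n)))
  by_cases hxF : x ∈ ⋃ i ∈ F, A i
  · obtain ⟨i, -, hxi⟩ := mem_iUnion₂.1 hxF
    have his : i ∈ s := by_contra fun his ↦ hxs (mem_biUnion his hxi)
    exact Or.inr ⟨hxf, mem_biUnion his hxi⟩
  · exact Or.inl ⟨hxf, hxF⟩

end PJIdeal

end FinIdeal

theorem stmt8_general {ι κ α : Type*} {A : ι → Set α} {V : κ → Set α}
    (hA : Pairwise (Disjoint on A)) (hV : Pairwise (Disjoint on V)) (hcover : ⋃ k, V k = univ) :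
    List.TFAE [
      IsPJIdeal (finIdeal A : Set (Set α)) (finIdeal V),
      {i | ¬ {k | (A i ∩ V k).Nonempty}.Finite}.Finite,
      ∃ s : Set ι, sᶜ.Finite ∧ ∀ X ∈ finIdeal A, (X ∩ ⋃ i ∈ s, A i) ∈ finIdeal V,
      {i | A i ∉ finIdeal V}.Finite
    ] := by
  have finite_mem (s : Set α) (hs : s.Finite) : s ∈ finIdeal V := mem_finIdeal_of_finite hs
  tfae_have 2 ↔ 4 := by
    simp only [mem_finIdeal_iff_finite_setOf_inter_nonempty hV hcover]
  tfae_have 1 → 4 := finite_setOf_notMem_of_isPJIdeal hA finite_mem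
  tfae_have 4 → 3 := fun h ↦ ⟨{i | A i ∈ finIdeal V}, h, fun _ hX ↦
    inter_biUnion_mem_of_mem_finIdeal hA finite_mem (fun _ hi ↦ hi) hX⟩
  tfae_have 3 → 1 := fun ⟨_, hs, h⟩ ↦ isPJIdeal_of_inter_biUnion_mem finite_mem hs h
  tfae_finish

theorem pairwise_disjoint_vert : Pairwise (Disjoint on Vert) := fun _ _ hmn ↦
  disjoint_left.2 fun _ hm hn ↦ hmn (hm.symm.trans hn)

theorem iUnion_vert : ⋃ n, Vert n = univ :=
  iUnion_eq_univ_iff.2 fun p ↦ ⟨p.1, rfl⟩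

theorem stmt8 (A : ℕ → Set (ℕ × ℕ)) (hA : IsPartition A) :
    List.TFAE [
      IsPJIdeal (FinPart A) FinVert,
      {n | ¬ {m | (A n ∩ Vert m).Nonempty}.Finite}.Finite,
      ∃ F : Set ℕ, Fᶜ.Finite ∧ ∀ X ∈ FinPart A, (X ∩ ⋃ k ∈ F, A k) ∈ FinVert,
      {n | A n ∉ FinVert}.Finite
    ] :=
  stmt8_general (fun i j hij ↦ disjoint_iff_inter_eq_empty.2 (hA.2.1 i j hij))
    pairwise_disjoint_vert iUnion_vert
end

section
/- For every k ∈ ℕ let T_k = {g_i^k : i < k} be a (k,k)-tower of functions, and assume dom(T_i) ∩ dom(T_j) = ∅ whenever i ≠ j. Let F be a finite set of functions from ℕ to ℕ (identified with their graphs). Then there exists i ≤ |F| such that for every m ∈ ℕ there exists n ≥ m with n > i and |g_i^n \ ⋃_{f∈F} f| ≥ m. -/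
/-- A subset of `ℕ × ℕ` is the graph of a partial function from `ℕ` to `ℕ`. -/
def IsPFunGraph (g : Set (ℕ × ℕ)) : Prop :=
  ∀ p ∈ g, ∀ q ∈ g, p.1 = q.1 → p = q

/-- The domain of (the graph of) a partial function. -/
def pdom (g : Set (ℕ × ℕ)) : Set ℕ := Prod.fst '' g

/-- The graph of a total function `ℕ → ℕ`. -/
def totGraph (f : ℕ → ℕ) : Set (ℕ × ℕ) := {p | f p.1 = p.2}

/-- A `(κ, lam)`-tower of functions: `lam` many pairwise disjoint nonempty
partial functions from `ℕ` to `ℕ`, all with the same domain of cardinality `κ`. -/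
def IsTower (κ lam : ℕ∞) (T : Set (Set (ℕ × ℕ))) : Prop :=
  T.encard = lam ∧
  (∀ g ∈ T, IsPFunGraph g ∧ g.Nonempty) ∧
  (∃ a : Set ℕ, a.encard = κ ∧ ∀ g ∈ T, pdom g = a) ∧
  (∀ g ∈ T, ∀ g' ∈ T, g ≠ g' → g ∩ g' = ∅)

/-- A `(κ, lam)`-tower of `B`-monochromatic functions. -/
def IsMonoTower (B : ℕ → Set (ℕ × ℕ)) (κ lam : ℕ∞) (T : Set (Set (ℕ × ℕ))) : Prop :=
  IsTower κ lam T ∧ ∀ g ∈ T, ∃ n, g ⊆ B n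

/-- The (indices of the) colors used by a tower: `C_T`. -/
def towerColors (B : ℕ → Set (ℕ × ℕ)) (T : Set (Set (ℕ × ℕ))) : Set ℕ :=
  {n | ∃ g ∈ T, g ⊆ B n}

/-- The domain of a tower: `dom(T)`. -/
def towerDom (T : Set (Set (ℕ × ℕ))) : Set ℕ := ⋃ g ∈ T, pdom g

/-- A sequence of essentially different towers: pairwise disjoint color sets
and pairwise disjoint domains. -/
def EssDiff (B : ℕ → Set (ℕ × ℕ)) (T : ℕ → Set (Set (ℕ × ℕ))) : Prop :=
  ∀ i j, i ≠ j → towerColors B (T i) ∩ towerColors B (T j) = ∅ ∧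
    towerDom (T i) ∩ towerDom (T j) = ∅

/-!
Over a point `x` of the common domain of a tower, each `f ∈ F` passes through at most one point,
and so meets at most one of the disjoint members of the tower there. Among any `|F| + 1` members,
some member therefore avoids `⋃ F` over `x`. If the domain is large, one of these members does so
over many `x`. The member found depends on the tower, but it has only the `|F| + 1` possible indices
`i ≤ |F|`, so along a sequence of towers with growing domains one index serves cofinally often.
-/

open Set

theorem exists_forall_of_antitone_of_forall_exists {ι β : Type*} [Preorder β] [Nonempty β]
    [IsDirectedOrder β] {I : Finset ι} {P : ι → β → Prop} (hP : ∀ i ∈ I, Antitone (P i))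
    (hex : ∀ b, ∃ i ∈ I, P i b) : ∃ i ∈ I, ∀ b, P i b := by
  classical
  by_contra! hfail
  choose! bad hbad using hfail
  obtain ⟨b, hb⟩ := (I.image bad).exists_le
  obtain ⟨i, hi, hib⟩ := hex b
  exact hbad i hi (hP i hi (hb _ (Finset.mem_image_of_mem bad hi)) hib)

section Projection

variable {α γ ι φ : Type*} {π : γ → α} {s : ι → Set γ} {I : Finset ι}

theorem exists_mem_image_diff_biUnion_of_card_lt {t : φ → Set γ} {F : Finset φ} {x : α}
    (hs : (I : Set ι).PairwiseDisjoint s) (ht : ∀ f ∈ F, InjOn π (t f)) (hcard : F.card < I.card)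
    (hx : ∀ i ∈ I, x ∈ π '' s i) : ∃ i ∈ I, x ∈ π '' (s i \ ⋃ f ∈ F, t f) := by
  by_contra! hcovered
  refine hcard.not_ge <|
    Finset.card_le_card_of_forall_subsingleton (fun i f => ∃ p ∈ s i ∩ t f, π p = x) ?_ ?_
  · intro i hi
    obtain ⟨p, hps, hpx⟩ := hx i hi
    have hp : p ∈ ⋃ f ∈ F, t f := by_contra fun hp => hcovered i hi ⟨p, ⟨hps, hp⟩, hpx⟩
    obtain ⟨f, hf, hpf⟩ := mem_iUnion₂.1 hp
    exact ⟨f, hf, p, ⟨hps, hpf⟩, hpx⟩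
  · rintro f hf i ⟨hi, p, ⟨hps, hpf⟩, hpx⟩ j ⟨hj, q, ⟨hqs, hqf⟩, hqx⟩
    have hpq : p = q := ht f hf hpf hqf (hpx.trans hqx.symm)
    exact hs.elim_set hi hj p hps (hpq ▸ hqs)

theorem exists_lt_encard_of_subset_biUnion_image {a : Set α} {m : ℕ∞}
    (ha : a ⊆ ⋃ i ∈ I, π '' s i) (hm : I.card * m < a.encard) : ∃ i ∈ I, m < (s i).encard := by
  by_contra! hle
  refine hm.not_ge ?_
  calc a.encard
    _ ≤ (⋃ i ∈ I, π '' s i).encard := encard_le_encard ha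
    _ ≤ ∑ i ∈ I, (π '' s i).encard := I.set_encard_biUnion_le _
    _ ≤ I.card • m :=
      Finset.sum_le_card_nsmul _ _ _ fun i hi => (encard_image_le π (s i)).trans (hle i hi)
    _ = I.card * m := nsmul_eq_mul _ _

end Projection

theorem IsPFunGraph.injOn_fst {h : Set (ℕ × ℕ)} (hh : IsPFunGraph h) : InjOn Prod.fst h :=
  fun _ hp _ hq => hh _ hp _ hq

theorem isPFunGraph_totGraph (f : ℕ → ℕ) : IsPFunGraph (totGraph f) :=
  fun _ hp _ hq hpq => Prod.ext hpq (hp.symm.trans ((congrArg f hpq).trans hq))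

namespace IsTower

variable {ι φ : Type*} {κ : ℕ∞} {L : Finset ι} {s : ι → Set (ℕ × ℕ)}

theorem pairwiseDisjoint (hT : IsTower κ L.card (s '' L)) : (L : Set ι).PairwiseDisjoint s := by
  obtain ⟨hcard, -, -, hdisj⟩ := hT
  have hinj : InjOn s L := L.finite_toSet.injOn_of_encard_image_eq
    (hcard.trans (encard_coe_eq_coe_finsetCard L).symm)
  exact fun i hi j hj hij => disjoint_iff_inter_eq_empty.2 <|
    hdisj _ (mem_image_of_mem s hi) _ (mem_image_of_mem s hj) (hinj.ne hi hj hij)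

theorem exists_lt_encard_diff_biUnion (hT : IsTower κ L.card (s '' L)) {I : Finset ι}
    (hIL : I ⊆ L) {t : φ → Set (ℕ × ℕ)} {F : Finset φ} (ht : ∀ f ∈ F, IsPFunGraph (t f))
    (hcard : F.card < I.card) {m : ℕ∞} (hm : I.card * m < κ) :
    ∃ i ∈ I, m < (s i \ ⋃ f ∈ F, t f).encard := by
  have hdisj : (I : Set ι).PairwiseDisjoint s :=
    hT.pairwiseDisjoint.subset (Finset.coe_subset.2 hIL)
  obtain ⟨-, -, ⟨a, rfl, hdom⟩, -⟩ := hT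
  refine exists_lt_encard_of_subset_biUnion_image (π := Prod.fst) (fun x hx => ?_) hm
  have hx_dom : ∀ i ∈ I, x ∈ Prod.fst '' s i := fun i hi =>
    (hdom _ (mem_image_of_mem s (hIL hi))).ge hx
  simpa only [mem_iUnion, exists_prop] using exists_mem_image_diff_biUnion_of_card_lt hdisj
    (fun f hf => (ht f hf).injOn_fst) hcard hx_dom

end IsTower

theorem stmt10_general {φ : Type*} (g : ℕ → ℕ → Set (ℕ × ℕ))
    (htower : ∀ k : ℕ, IsTower (k : ℕ∞) (k : ℕ∞) (g k '' Set.Iio k))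
    (F : Finset φ) (t : φ → Set (ℕ × ℕ)) (ht : ∀ f ∈ F, IsPFunGraph (t f)) :
    ∃ i ≤ F.card, ∀ m : ℕ, ∃ n : ℕ, m ≤ n ∧ i < n ∧
      (m : ℕ∞) ≤ (g n i \ ⋃ f ∈ F, t f).encard := by
  suffices ∃ i ∈ Finset.Iic F.card, ∀ m : ℕ, ∃ n : ℕ, m ≤ n ∧ i < n ∧
      (m : ℕ∞) ≤ (g n i \ ⋃ f ∈ F, t f).encard by simpa only [Finset.mem_Iic] using this
  refine exists_forall_of_antitone_of_forall_exists (fun i _ m m' hmm' => ?_) fun m => ?_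
  · rintro ⟨n, hn, hin, hle⟩
    exact ⟨n, hmm'.trans hn, hin, (Nat.cast_le.2 hmm').trans hle⟩
  · set n := (F.card + 1) * (m + 1) with hn
    have hFn : F.card < n := by nlinarith
    have hI : Finset.Iic F.card ⊆ Finset.Iio n := fun i hi =>
      Finset.mem_Iio.2 ((Finset.mem_Iic.1 hi).trans_lt hFn)
    have hT : IsTower n (Finset.Iio n).card (g n '' (Finset.Iio n : Finset ℕ)) := by
      simpa only [Nat.card_Iio, Finset.coe_Iio] using htower n
    have hsize : ((Finset.Iic F.card).card * m : ℕ∞) < n := by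
      rw [Nat.card_Iic]
      exact_mod_cast (by nlinarith : (F.card + 1) * m < n)
    obtain ⟨i, hi, hlt⟩ := hT.exists_lt_encard_diff_biUnion hI ht (by simp) hsize
    exact ⟨i, hi, n, by nlinarith [Nat.zero_le (F.card * m)], Finset.mem_Iio.1 (hI hi), hlt.le⟩

theorem stmt10 (g : ℕ → ℕ → Set (ℕ × ℕ))
    (htower : ∀ k : ℕ, IsTower (k : ℕ∞) (k : ℕ∞) (g k '' Set.Iio k))
    (hdom : ∀ i j : ℕ, i ≠ j →
      towerDom (g i '' Set.Iio i) ∩ towerDom (g j '' Set.Iio j) = ∅)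
    (F : Finset (ℕ → ℕ)) :
    ∃ i ≤ F.card, ∀ m : ℕ, ∃ n : ℕ, m ≤ n ∧ i < n ∧
      (m : ℕ∞) ≤ (g n i \ ⋃ f ∈ F, totGraph f).encard :=
  stmt10_general g htower F totGraph fun f _ => isPFunGraph_totGraph f
end

section
/- Let B be a partition of ℕ×ℕ into infinitely many infinite sets. If the ideal Sel on ℕ×ℕ is a P(Sel(B))-ideal, then there exists k ∈ ℕ such that there is no (k,k)-tower of B-monochromatic functions. -/
open Set

/-!
Suppose that for every `k` there is a `(k, k)`-tower of monochromatic functions. Taking towers of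
sizes `3 ^ k` and cutting the domains down to pairwise disjoint ones, still of size at least `k`, we
can glue the `i`-th functions of all the towers into one function `F i`. Let `A ∈ Sel` absorb all
graphs `F i` modulo `Sel(B)`, and let the verticals of `A` have at most `m` points. On a
monochromatic domain, each of `F 0, …, F m` leaves `A` at boundedly many points only, so on a large
enough domain some `x` has all of the `m + 1` distinct points `(x, F i x)` in `A`, a contradiction.
-/

section Finset

variable {ι α : Type*}

theorem card_le_card_disjointed_add_sum [DecidableEq α] [Preorder ι]
    [LocallyFiniteOrderBot ι] (a : ι → Finset α) (k : ι) :
    (a k).card ≤ (disjointed a k).card + ∑ j ∈ Finset.Iio k, (a j).card := by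
  rw [disjointed_apply, Finset.sup_eq_biUnion]
  calc (a k).card
      ≤ (a k \ (Finset.Iio k).biUnion a).card + ((Finset.Iio k).biUnion a).card :=
        Finset.card_le_card_sdiff_add_card
    _ ≤ _ := by gcongr; exact Finset.card_biUnion_le

theorem le_card_disjointed_of_card_eq_three_pow [DecidableEq α] {a : ℕ → Finset α}
    (ha : ∀ k, (a k).card = 3 ^ k) (k : ℕ) : k ≤ (disjointed a k).card := by
  have hcard := card_le_card_disjointed_add_sum a k
  have hgeom : (∑ j ∈ Finset.range k, 3 ^ j) * 2 + 1 = 3 ^ k := geom_sum_mul_add 2 k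
  have hsum : k ≤ ∑ j ∈ Finset.range k, 3 ^ j := by
    simpa using Finset.sum_le_sum fun j (_ : j ∈ Finset.range k) => Nat.one_le_pow' j 2
  simp only [ha, Nat.Iio_eq_range] at hcard
  lia

theorem exists_index_of_pairwise_disjoint [Nonempty ι] {d : ι → Finset α}
    (hd : Pairwise (Function.onFun Disjoint d)) :
    ∃ idx : α → ι, ∀ k, ∀ x ∈ d k, idx x = k := by
  have hex (x : α) : ∃ k, ∀ j, x ∈ d j → k = j := by
    by_cases hx : ∃ k, x ∈ d k
    · obtain ⟨k, hk⟩ := hx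
      exact ⟨k, fun j hj => by_contra fun hne => Finset.disjoint_left.1 (hd hne) hk hj⟩
    · exact ⟨Classical.arbitrary ι, fun j hj => (hx ⟨j, hj⟩).elim⟩
  choose idx hidx using hex
  exact ⟨idx, fun k x hx => hidx x k hx⟩

theorem exists_mem_forall_of_sum_card_filter_not_lt (s : Finset ι) (d : Finset α)
    (p : ι → α → Prop) [∀ i, DecidablePred (p i)]
    (h : ∑ i ∈ s, (d.filter fun x => ¬ p i x).card < d.card) :
    ∃ x ∈ d, ∀ i ∈ s, p i x := by
  classical
  obtain ⟨x, hxd, hx⟩ :=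
    Finset.exists_mem_notMem_of_card_lt_card (Finset.card_biUnion_le.trans_lt h)
  refine ⟨x, hxd, fun i hi => by_contra fun hp => hx ?_⟩
  exact Finset.mem_biUnion.2 ⟨i, hi, Finset.mem_filter.2 ⟨hxd, hp⟩⟩

end Finset

section Graph

variable {A C : Set (ℕ × ℕ)}

theorem totGraph_mem_SelI (f : ℕ → ℕ) : totGraph f ∈ SelI := by
  refine ⟨1, fun n => ?_⟩
  rw [Nat.cast_one, Set.encard_le_one_iff]
  rintro p q ⟨hp, rfl⟩ ⟨hq, hqp⟩
  exact Prod.ext hqp.symm (hp.symm.trans ((congrArg f hqp.symm).trans hq))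

open Classical in
theorem card_filter_notMem_le_encard {d : Finset ℕ} {f : ℕ → ℕ} (hC : ∀ x ∈ d, (x, f x) ∈ C) :
    ((d.filter fun x => (x, f x) ∉ A).card : ℕ∞) ≤ ((totGraph f \ A) ∩ C).encard := by
  have hinj : Function.Injective fun x => (x, f x) := fun x y hxy => (Prod.mk.inj hxy).1
  rw [← Set.encard_coe_eq_coe_finsetCard, ← hinj.encard_image]
  refine Set.encard_le_encard ?_
  rintro _ ⟨x, hx, rfl⟩
  obtain ⟨hxd, hxA⟩ := Finset.mem_filter.1 hx
  exact ⟨⟨rfl, hxA⟩, hC x hxd⟩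

theorem le_encard_inter_Vert {u : ℕ → ℕ} {h x : ℕ} (hu : InjOn u (Iio h))
    (hA : ∀ i < h, (x, u i) ∈ A) : (h : ℕ∞) ≤ (A ∩ Vert x).encard := by
  have hinj : InjOn (fun i => (x, u i)) (Iio h) := fun i hi j hj hij =>
    hu hi hj (Prod.mk.inj hij).2
  calc (h : ℕ∞) = (Iio h).encard := by simp [Set.encard_eq_coe_toFinset_card]
    _ = ((fun i => (x, u i)) '' Iio h).encard := hinj.encard_image.symm
    _ ≤ (A ∩ Vert x).encard := Set.encard_le_encard <| by
      rintro _ ⟨i, hi, rfl⟩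
      exact ⟨hA i hi, rfl⟩

end Graph

/-- The restrictions of `F 0, …, F (h - 1)` to `d` are `B`-monochromatic and pairwise disjoint, so
they form a `(|d|, h)`-tower of `B`-monochromatic functions when `d` is nonempty. Unlike
`IsMonoTower`, this presents the tower by total functions in a fixed order, so that towers with
disjoint domains can be glued. -/
structure IsMonoTowerOn (B : ℕ → Set (ℕ × ℕ)) (F : ℕ → ℕ → ℕ) (d : Finset ℕ) (h : ℕ) : Prop where
  exists_color : ∀ i < h, ∃ n, ∀ x ∈ d, (x, F i x) ∈ B n
  injOn : ∀ x ∈ d, InjOn (F · x) (Iio h)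

section Tower

variable {B : ℕ → Set (ℕ × ℕ)}

namespace IsMonoTowerOn

variable {F G : ℕ → ℕ → ℕ} {d d' : Finset ℕ} {h h' : ℕ}

theorem mono (hF : IsMonoTowerOn B F d h) (hd : d' ⊆ d) (hh : h' ≤ h) :
    IsMonoTowerOn B F d' h' where
  exists_color i hi := (hF.exists_color i (hi.trans_le hh)).imp fun _ hn x hx => hn x (hd hx)
  injOn x hx := (hF.injOn x (hd hx)).mono (Iio_subset_Iio hh)

theorem congr (hF : IsMonoTowerOn B F d h) (hFG : ∀ x ∈ d, ∀ i, F i x = G i x) :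
    IsMonoTowerOn B G d h where
  exists_color i hi := (hF.exists_color i hi).imp fun _ hn x hx => hFG x hx i ▸ hn x hx
  injOn x hx := (hF.injOn x hx).congr fun i _ => hFG x hx i

theorem exists_mem_forall_mem (hF : IsMonoTowerOn B F d h) {A : Set (ℕ × ℕ)} {c : ℕ → ℕ}
    (hc : ∀ i n, ((totGraph (F i) \ A) ∩ B n).encard ≤ c i)
    (hd : ∑ i ∈ Finset.range h, c i < d.card) :
    ∃ x ∈ d, ∀ i < h, (x, F i x) ∈ A := by
  classical
  have hbad : ∀ i ∈ Finset.range h, (d.filter fun x => (x, F i x) ∉ A).card ≤ c i := by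
    intro i hi
    obtain ⟨n, hn⟩ := hF.exists_color i (Finset.mem_range.1 hi)
    exact_mod_cast (card_filter_notMem_le_encard hn).trans (hc i n)
  obtain ⟨x, hxd, hx⟩ := exists_mem_forall_of_sum_card_filter_not_lt (Finset.range h) d
    (fun i x => (x, F i x) ∈ A) ((Finset.sum_le_sum hbad).trans_lt hd)
  exact ⟨x, hxd, fun i hi => hx i (Finset.mem_range.2 hi)⟩

end IsMonoTowerOn

theorem IsMonoTower.exists_isMonoTowerOn {k h : ℕ} {T : Set (Set (ℕ × ℕ))}
    (hT : IsMonoTower B k h T) :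
    ∃ (d : Finset ℕ) (F : ℕ → ℕ → ℕ), d.card = k ∧ IsMonoTowerOn B F d h := by
  obtain ⟨⟨hTcard, -, ⟨a, hacard, hdom⟩, hdisj⟩, hcolor⟩ := hT
  obtain ⟨d, rfl⟩ := (Set.finite_of_encard_eq_coe hacard).exists_finset_coe
  obtain ⟨e, heT, heinj⟩ := (Set.finite_Iio h).exists_injOn_of_encard_le (t := T)
    (by simp [hTcard, Set.encard_eq_coe_toFinset_card])
  have hval : ∀ i x, i < h → x ∈ d → ∃ y, (x, y) ∈ e i := by
    intro i x hi hx
    obtain ⟨⟨_, y⟩, hy, rfl⟩ : x ∈ pdom (e i) := (hdom _ (heT hi)).symm ▸ hx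
    exact ⟨y, hy⟩
  choose! F hF using hval
  refine ⟨d, F, by simpa using hacard, ⟨fun i hi => ?_, fun x hx i hi j hj hij => ?_⟩⟩
  · exact (hcolor _ (heT hi)).imp fun n hn x hx => hn (hF i x hi hx)
  · have hmem : (x, F i x) ∈ e i ∩ e j :=
      ⟨hF i x hi hx, (show F i x = F j x from hij) ▸ hF j x hj hx⟩
    by_contra hne
    rw [hdisj _ (heT hi) _ (heT hj) fun heq => hne (heinj hi hj heq)] at hmem
    exact hmem

theorem exists_forall_isMonoTowerOn (hT : ∀ k : ℕ, ∃ T, IsMonoTower B k k T) :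
    ∃ (F : ℕ → ℕ → ℕ) (d : ℕ → Finset ℕ), ∀ k, k ≤ (d k).card ∧ IsMonoTowerOn B F (d k) k := by
  have hT' (k : ℕ) : ∃ (a : Finset ℕ) (G : ℕ → ℕ → ℕ),
      a.card = 3 ^ k ∧ IsMonoTowerOn B G a (3 ^ k) :=
    (hT (3 ^ k)).elim fun _ h => h.exists_isMonoTowerOn
  choose a G hacard hG using hT'
  obtain ⟨idx, hidx⟩ := exists_index_of_pairwise_disjoint (disjoint_disjointed a)
  refine ⟨fun i x => G (idx x) i x, disjointed a, fun k =>
    ⟨le_card_disjointed_of_card_eq_three_pow hacard k, ?_⟩⟩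
  have hrestrict : IsMonoTowerOn B (G k) (disjointed a k) k :=
    (hG k).mono (disjointed_le a k) (Nat.lt_pow_self (by norm_num)).le
  exact hrestrict.congr fun x hx i => by rw [hidx k x hx]

theorem exists_forall_not_isMonoTowerOn (h : IsPJIdeal SelI (SelPart B)) (F : ℕ → ℕ → ℕ) :
    ∃ k : ℕ, ∀ d : Finset ℕ, k ≤ d.card → ¬ IsMonoTowerOn B F d k := by
  obtain ⟨A, ⟨m, hA⟩, hFA⟩ := h (fun i => totGraph (F i)) fun i => totGraph_mem_SelI (F i)
  choose c hc using hFA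
  refine ⟨∑ i ∈ Finset.range (m + 1), c i + (m + 1), fun d hd hF => ?_⟩
  have hFm : IsMonoTowerOn B F d (m + 1) := hF.mono subset_rfl (Nat.le_add_left _ _)
  obtain ⟨x, hxd, hxA⟩ := hFm.exists_mem_forall_mem hc (by lia)
  have hle : ((m + 1 : ℕ) : ℕ∞) ≤ m := (le_encard_inter_Vert (hFm.injOn x hxd) hxA).trans (hA x)
  exact Nat.not_succ_le_self m (by exact_mod_cast hle)

end Tower

theorem stmt11_general (B : ℕ → Set (ℕ × ℕ)) (h : IsPJIdeal SelI (SelPart B)) :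
    ∃ k : ℕ, ∀ T : Set (Set (ℕ × ℕ)), ¬ IsMonoTower B (k : ℕ∞) (k : ℕ∞) T := by
  by_contra! hT
  obtain ⟨F, d, hF⟩ := exists_forall_isMonoTowerOn hT
  obtain ⟨k, hk⟩ := exists_forall_not_isMonoTowerOn h F
  exact hk (d k) (hF k).1 (hF k).2

theorem stmt11 (B : ℕ → Set (ℕ × ℕ)) (hB : IsPartition B)
    (h : IsPJIdeal SelI (SelPart B)) :
    ∃ k : ℕ, ∀ T : Set (Set (ℕ × ℕ)), ¬ IsMonoTower B (k : ℕ∞) (k : ℕ∞) T :=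
  stmt11_general B h
end

section
/- Let B be a partition of ℕ×ℕ into infinitely many infinite sets. If the ideal Sel on ℕ×ℕ is a P(ED(B))-ideal, then there is no sequence ⟨T_k : k ∈ ℕ⟩ of essentially different towers such that each T_k is a (k,k)-tower of B-monochromatic functions. -/
open Set

/-!
Enumerate the members of each tower `T k` as `g k 0, …, g k (k - 1)` and, for every `n`, glue the
`n`-th members of the towers `T k` with `n < k`. As the towers have disjoint domains, the result is
a partial function, so it belongs to `Sel`. Let `A ∈ Sel` be a set that absorbs all these functions
modulo `ED(B)`, with at most `m` points in every vertical. As the towers use disjoint sets of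
colors, for each `n` there is a bound `M n` such that `g k n` has at most `M n` points outside `A`
for all large `k`.

For `k` large, look only at `g k 0, …, g k m`. Over each of the `k` points of `dom (T k)` these take
`m + 1` different values, at least one of which lies outside `A`. Hence `k ≤ M 0 + ⋯ + M m`, which
fails for large `k`.
-/

section PartialFunctions

variable {ι : Type*}

lemma IsPFunGraph.mem_SelI {f : Set (ℕ × ℕ)} (hf : IsPFunGraph f) : f ∈ SelI := by
  refine ⟨1, fun x => ?_⟩
  rw [Nat.cast_one, encard_le_one_iff]
  rintro p q ⟨hp, hpx⟩ ⟨hq, hqx⟩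
  exact hf p hp q hq (Eq.trans hpx (Eq.symm hqx))

lemma isPFunGraph_biUnion {K : Set ι} {s : ι → Set (ℕ × ℕ)} (hs : ∀ k ∈ K, IsPFunGraph (s k))
    (hdisj : K.PairwiseDisjoint fun k => pdom (s k)) : IsPFunGraph (⋃ k ∈ K, s k) := by
  intro p hp q hq hpq
  obtain ⟨k, hk, hpk⟩ := mem_iUnion₂.1 hp
  obtain ⟨l, hl, hql⟩ := mem_iUnion₂.1 hq
  obtain rfl : k = l :=
    hdisj.elim_set hk hl p.1 (mem_image_of_mem _ hpk) (hpq ▸ mem_image_of_mem _ hql)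
  exact hs k hk p hpk q hql hpq

variable {F : Finset ι} {g : ι → Set (ℕ × ℕ)} {A : Set (ℕ × ℕ)}

lemma exists_mem_pdom_diff {x : ℕ} (hdisj : (F : Set ι).PairwiseDisjoint g)
    (hx : ∀ i ∈ F, x ∈ pdom (g i)) (hA : (A ∩ Vert x).encard < F.card) :
    ∃ i ∈ F, x ∈ pdom (g i \ A) := by
  by_contra! hnone
  choose! p hpg hpx using hx
  have hpA : MapsTo p F (A ∩ Vert x) := fun i hi =>
    ⟨by_contra fun hpA => hnone i hi ⟨p i, ⟨hpg i hi, hpA⟩, hpx i hi⟩, hpx i hi⟩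
  have hp_inj : InjOn p F := fun i hi j hj hij =>
    hdisj.elim_set hi hj (p i) (hpg i hi) (hij ▸ hpg j hj)
  have hcard := encard_le_encard_of_injOn hpA hp_inj
  rw [encard_coe_eq_coe_finsetCard] at hcard
  exact hA.not_ge hcard

lemma encard_le_sum_encard_diff {a : Set ℕ} (hdisj : (F : Set ι).PairwiseDisjoint g)
    (ha : ∀ i ∈ F, a ⊆ pdom (g i)) (hA : ∀ x ∈ a, (A ∩ Vert x).encard < F.card) :
    a.encard ≤ ∑ i ∈ F, (g i \ A).encard := by
  have hcover : a ⊆ ⋃ i ∈ F, pdom (g i \ A) := fun x hx =>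
    mem_iUnion₂.2 <| by
      simpa only [exists_prop] using exists_mem_pdom_diff hdisj (fun i hi => ha i hi hx) (hA x hx)
  calc a.encard ≤ (⋃ i ∈ F, pdom (g i \ A)).encard := encard_le_encard hcover
    _ ≤ ∑ i ∈ F, (pdom (g i \ A)).encard := F.set_encard_biUnion_le _
    _ ≤ ∑ i ∈ F, (g i \ A).encard := Finset.sum_le_sum fun _ _ => encard_image_le _ _

end PartialFunctions

lemma exists_finite_lt_encard_of_mem_EDPart {ι : Type*} {B : ℕ → Set (ℕ × ℕ)} {X : Set (ℕ × ℕ)}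
    (hX : X ∈ EDPart B) {K : Set ι} {s : ι → Set (ℕ × ℕ)} {c : ι → ℕ}
    (hs : ∀ k ∈ K, s k ⊆ X ∩ B (c k)) (hc : InjOn c K) :
    ∃ M : ℕ, {k ∈ K | (M : ℕ∞) < (s k).encard}.Finite := by
  obtain ⟨M, hM⟩ := hX
  refine ⟨M, Finite.of_finite_image (hM.subset ?_) (hc.mono (sep_subset _ _))⟩
  rintro _ ⟨k, ⟨hk, hlt⟩, rfl⟩
  exact hlt.trans_le (encard_le_encard (hs k hk))

lemma IsTower.exists_bijOn_Iio {κ : ℕ∞} {k : ℕ} {T : Set (Set (ℕ × ℕ))} (hT : IsTower κ k T) :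
    ∃ g : ℕ → Set (ℕ × ℕ), BijOn g (Iio k) T :=
  (finite_Iio k).exists_bijOn_of_encard_eq <| by
    rw [hT.1, ← Finset.coe_Iio, encard_coe_eq_coe_finsetCard, Nat.card_Iio]

lemma IsTower.le_sum_encard_diff {ι : Type*} {κ lam : ℕ∞} {T : Set (Set (ℕ × ℕ))}
    (hT : IsTower κ lam T) {F : Finset ι} {g : ι → Set (ℕ × ℕ)} (hgT : MapsTo g F T)
    (hg : InjOn g F) {A : Set (ℕ × ℕ)} (hA : ∀ x, (A ∩ Vert x).encard < F.card) :
    κ ≤ ∑ i ∈ F, (g i \ A).encard := by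
  obtain ⟨-, -, ⟨a, rfl, ha⟩, hdisj⟩ := hT
  refine encard_le_sum_encard_diff (fun i hi j hj hij => ?_) (fun i hi => (ha _ (hgT hi)).ge)
    fun x _ => hA x
  exact disjoint_iff_inter_eq_empty.2 (hdisj _ (hgT hi) _ (hgT hj) (hg.ne hi hj hij))

section EssentiallyDifferent

variable {B : ℕ → Set (ℕ × ℕ)} {T : ℕ → Set (Set (ℕ × ℕ))} {K : Set ℕ} {s : ℕ → Set (ℕ × ℕ)}

lemma EssDiff.pairwiseDisjoint_pdom (hE : EssDiff B T) (hsT : ∀ k ∈ K, s k ∈ T k) :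
    K.PairwiseDisjoint fun k => pdom (s k) := fun k hk l hl hkl =>
  (disjoint_iff_inter_eq_empty.2 (hE k l hkl).2).mono
    (subset_biUnion_of_mem (hsT k hk)) (subset_biUnion_of_mem (hsT l hl))

lemma EssDiff.injOn_color (hE : EssDiff B T) {c : ℕ → ℕ} (hsT : ∀ k ∈ K, s k ∈ T k)
    (hc : ∀ k ∈ K, s k ⊆ B (c k)) : InjOn c K := by
  intro k hk l hl hkl
  by_contra hne
  exact (disjoint_iff_inter_eq_empty.2 (hE k l hne).1).notMem_of_mem_left
    ⟨s k, hsT k hk, hc k hk⟩ ⟨s l, hsT l hl, hkl ▸ hc l hl⟩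

lemma EssDiff.biUnion_mem_SelI (hE : EssDiff B T) (hsT : ∀ k ∈ K, s k ∈ T k)
    (hs : ∀ k ∈ K, IsPFunGraph (s k)) : ⋃ k ∈ K, s k ∈ SelI :=
  (isPFunGraph_biUnion hs (hE.pairwiseDisjoint_pdom hsT)).mem_SelI

lemma EssDiff.exists_finite_lt_encard_diff (hE : EssDiff B T) (hsT : ∀ k ∈ K, s k ∈ T k)
    (hmono : ∀ k ∈ K, ∃ c, s k ⊆ B c) {A : Set (ℕ × ℕ)} (hA : (⋃ k ∈ K, s k) \ A ∈ EDPart B) :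
    ∃ M : ℕ, {k ∈ K | (M : ℕ∞) < (s k \ A).encard}.Finite := by
  choose! c hc using hmono
  refine exists_finite_lt_encard_of_mem_EDPart hA (fun k hk => ?_) (hE.injOn_color hsT hc)
  exact subset_inter (sdiff_subset_sdiff_left (subset_biUnion_of_mem hk))
    (sdiff_subset.trans (hc k hk))

lemma EssDiff.exists_eventually_encard_diff_le (hE : EssDiff B T)
    (h : IsPJIdeal SelI (EDPart B)) {κ lam : ℕ → ℕ∞}
    (hT : ∀ k, IsMonoTower B (κ k) (lam k) (T k)) {g : ℕ → ℕ → Set (ℕ × ℕ)}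
    (hgT : ∀ n, ∀ k ∈ Ioi n, g k n ∈ T k) :
    ∃ A ∈ SelI, ∀ n, ∃ M : ℕ, ∀ᶠ k in Filter.atTop, (g k n \ A).encard ≤ M := by
  obtain ⟨A, hA, hdiff⟩ := h (fun n => ⋃ k ∈ Ioi n, g k n) fun n =>
    hE.biUnion_mem_SelI (hgT n) fun k hk => ((hT k).1.2.1 _ (hgT n k hk)).1
  refine ⟨A, hA, fun n => ?_⟩
  obtain ⟨M, hM⟩ :=
    hE.exists_finite_lt_encard_diff (hgT n) (fun k hk => (hT k).2 _ (hgT n k hk)) (hdiff n)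
  have hM_eventually := hM.eventually_cofinite_notMem
  rw [Nat.cofinite_eq_atTop] at hM_eventually
  refine ⟨M, ?_⟩
  filter_upwards [hM_eventually, Filter.eventually_gt_atTop n] with k hkM hnk
  exact not_lt.1 fun hlt => hkM ⟨hnk, hlt⟩

end EssentiallyDifferent

theorem stmt12_general (B : ℕ → Set (ℕ × ℕ)) (h : IsPJIdeal SelI (EDPart B)) :
    ¬ ∃ T : ℕ → Set (Set (ℕ × ℕ)),
      (∀ k : ℕ, IsMonoTower B (k : ℕ∞) (k : ℕ∞) (T k)) ∧ EssDiff B T := by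
  rintro ⟨T, hT, hE⟩
  choose g hg using fun k => (hT k).1.exists_bijOn_Iio
  obtain ⟨A, ⟨m, hA⟩, hbound⟩ := hE.exists_eventually_encard_diff_le h hT
    fun n k (hk : n < k) => (hg k).mapsTo hk
  choose M hM using hbound
  obtain ⟨k, hkM, hmk, hk⟩ := (((Filter.eventually_all_finset (Finset.range (m + 1))).2
    fun n _ => hM n).and ((Filter.eventually_gt_atTop m).and
    (Filter.eventually_gt_atTop (∑ n ∈ Finset.range (m + 1), M n)))).exists
  have hlt (n) (hn : n ∈ Finset.range (m + 1)) : n < k :=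
    (Finset.mem_range_succ_iff.1 hn).trans_lt hmk
  have hA_lt (x) : (A ∩ Vert x).encard < (Finset.range (m + 1)).card :=
    (hA x).trans_lt (by rw [Finset.card_range]; exact_mod_cast m.lt_succ_self)
  have hk_le : (k : ℕ∞) ≤ ∑ n ∈ Finset.range (m + 1), (M n : ℕ∞) :=
    calc (k : ℕ∞) ≤ ∑ n ∈ Finset.range (m + 1), (g k n \ A).encard :=
          (hT k).1.le_sum_encard_diff ((hg k).mapsTo.mono_left hlt) ((hg k).injOn.mono hlt) hA_lt
      _ ≤ _ := Finset.sum_le_sum hkM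
  exact hk.not_ge (by exact_mod_cast hk_le)

theorem stmt12 (B : ℕ → Set (ℕ × ℕ)) (hB : IsPartition B)
    (h : IsPJIdeal SelI (EDPart B)) :
    ¬ ∃ T : ℕ → Set (Set (ℕ × ℕ)),
      (∀ k : ℕ, IsMonoTower B (k : ℕ∞) (k : ℕ∞) (T k)) ∧ EssDiff B T :=
  stmt12_general B h
end

section
/- Let B be a partition of ℕ×ℕ into infinitely many infinite sets. If the ideal Sel on ℕ×ℕ is a P(FinFin(B))-ideal, then there is no sequence ⟨T_k : k ∈ ℕ⟩ of essentially different towers such that each T_k is an (ω,k)-tower of B-monochromatic functions. -/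
open Set

/-!
Enumerate `k` members of each tower `T k` and let the `i`-th row be the union over `k > i` of the
`i`-th members. The domains of the towers are disjoint, so every row is a partial function and
hence lies in `Sel`. Let `A ∈ Sel`, with at most `m` points in each vertical, contain all rows
modulo `FinFin(B)`. In a tower with more than `m` members, one of the first `m + 1` members `g`
has `g \ A` infinite: otherwise, over almost every point of the common domain, `A` would contain
a point of each of these `m + 1` disjoint functions. Hence the color of `g` has infinite
intersection with `row i \ A` for some `i ≤ m`. Only finitely many colors do, since these
differences lie in `FinFin(B)`, while the infinitely many towers use disjoint sets of colors.
-/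

open Function

theorem encard_le_encard_of_pairwiseDisjoint_of_inter_nonempty {ι α : Type*} {s : Set ι}
    {f : ι → Set α} {C : Set α} (hf : s.PairwiseDisjoint f)
    (hC : ∀ i ∈ s, (f i ∩ C).Nonempty) : s.encard ≤ C.encard := by
  choose p hpf hpC using hC
  have hp : Injective fun i : s => (⟨p i i.2, hpC i i.2⟩ : C) := fun i j hij =>
    Subtype.ext (hf.elim_set i.2 j.2 (p i i.2) (hpf i i.2)
      (Subtype.mk.inj hij ▸ hpf j j.2))
  exact Embedding.encard_le ⟨_, hp⟩

theorem encard_Iio_nat (k : ℕ) : (Iio k).encard = k := by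
  rw [← Finset.coe_Iio, encard_coe_eq_coe_finsetCard, Nat.card_Iio]

theorem finite_setOf_infinite_inter_of_mem_FinFinPart {B : ℕ → Set (ℕ × ℕ)}
    (hB : Pairwise (Disjoint on B)) {X : Set (ℕ × ℕ)} (hX : X ∈ FinFinPart B) :
    {n | (X ∩ B n).Infinite}.Finite := by
  obtain ⟨Y, ⟨F, hF⟩, Z, hZ, hXYZ⟩ := hX
  refine F.finite_toSet.subset fun n hn => ?_
  by_contra hnF
  have hdisj : Disjoint (B n) (⋃ j ∈ F, B j) :=
    disjoint_iUnion₂_right.2 fun j hj => hB fun hnj => hnF (hnj ▸ hj)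
  refine hn ((hF.union (hZ n)).subset ?_)
  rintro p ⟨hpX, hpn⟩
  exact (hXYZ hpX).imp (fun hpY => ⟨hpY, disjoint_left.1 hdisj hpn⟩) fun hpZ => ⟨hpZ, hpn⟩

namespace IsPFunGraph

theorem mem_SelI_s13 {g : Set (ℕ × ℕ)} (hg : IsPFunGraph g) : g ∈ SelI := by
  refine ⟨1, fun n => ?_⟩
  rw [Nat.cast_one, encard_le_one_iff]
  rintro p q ⟨hp, hpn⟩ ⟨hq, hqn⟩
  exact hg p hp q hq (hpn.trans hqn.symm)

theorem biUnion {ι : Type*} {s : Set ι} {g : ι → Set (ℕ × ℕ)}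
    (hg : ∀ i ∈ s, IsPFunGraph (g i)) (hdom : s.PairwiseDisjoint fun i => pdom (g i)) :
    IsPFunGraph (⋃ i ∈ s, g i) := by
  intro p hp q hq hpq
  obtain ⟨i, hi, hpi⟩ := mem_iUnion₂.1 hp
  obtain ⟨j, hj, hqj⟩ := mem_iUnion₂.1 hq
  obtain rfl : i = j :=
    hdom.elim_set hi hj p.1 (mem_image_of_mem _ hpi) (hpq ▸ mem_image_of_mem _ hqj)
  exact hg i hi p hpi q hqj hpq

end IsPFunGraph

theorem exists_infinite_sdiff_of_encard_inter_Vert_lt {ι : Type*} {s : Set ι} (hs : s.Finite)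
    {g : ι → Set (ℕ × ℕ)} (hg : s.PairwiseDisjoint g) {a : Set ℕ} (ha : a.Infinite)
    (hdom : ∀ i ∈ s, a ⊆ pdom (g i)) {A : Set (ℕ × ℕ)}
    (hA : ∀ n ∈ a, (A ∩ Vert n).encard < s.encard) : ∃ i ∈ s, (g i \ A).Infinite := by
  by_contra! hfin
  have hbad : (⋃ i ∈ s, pdom (g i \ A)).Finite :=
    hs.biUnion fun i hi => (hfin i hi).image _
  obtain ⟨x, hxa, hx⟩ := (ha.sdiff hbad).nonempty
  refine (hA x hxa).not_ge (encard_le_encard_of_pairwiseDisjoint_of_inter_nonempty hg ?_)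
  intro i hi
  obtain ⟨p, hp, rfl⟩ := hdom i hi hxa
  have hpA : p ∈ A := by
    by_contra hpA
    exact hx (mem_biUnion hi (mem_image_of_mem _ ⟨hp, hpA⟩))
  exact ⟨p, hp, hpA, rfl⟩

section Tower

variable {κ lam : ℕ∞} {T : Set (Set (ℕ × ℕ))} {g : Set (ℕ × ℕ)}

theorem pdom_subset_towerDom (hg : g ∈ T) : pdom g ⊆ towerDom T :=
  subset_biUnion_of_mem (u := pdom) hg

namespace IsTower

theorem pairwiseDisjoint_s13 (hT : IsTower κ lam T) : T.PairwiseDisjoint id :=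
  fun g hg g' hg' hne => disjoint_iff_inter_eq_empty.2 (hT.2.2.2 g hg g' hg' hne)

theorem exists_injOn_Iio (hT : IsTower κ lam T) {k : ℕ} (hk : (k : ℕ∞) ≤ lam) :
    ∃ g : ℕ → Set (ℕ × ℕ), MapsTo g (Iio k) T ∧ InjOn g (Iio k) :=
  (finite_Iio k).exists_injOn_of_encard_le (by rwa [encard_Iio_nat, hT.1])

theorem exists_infinite_sdiff (hT : IsTower ⊤ lam T) {ι : Type*} {s : Set ι} (hs : s.Finite)
    {g : ι → Set (ℕ × ℕ)} (hgT : MapsTo g s T) (hg : InjOn g s) {A : Set (ℕ × ℕ)}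
    (hA : ∀ n, (A ∩ Vert n).encard < s.encard) : ∃ i ∈ s, (g i \ A).Infinite := by
  obtain ⟨a, ha, hdom⟩ := hT.2.2.1
  exact exists_infinite_sdiff_of_encard_inter_Vert_lt hs
    (fun i hi j hj hij => hT.pairwiseDisjoint_s13 (hgT hi) (hgT hj) (hg.ne hi hj hij))
    (encard_eq_top_iff.1 ha) (fun i hi => (hdom _ (hgT hi)).ge) fun n _ => hA n

end IsTower

end Tower

namespace EssDiff

variable {B : ℕ → Set (ℕ × ℕ)} {T : ℕ → Set (Set (ℕ × ℕ))}

theorem pairwise_disjoint_towerColors (hT : EssDiff B T) :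
    Pairwise (Disjoint on fun k => towerColors B (T k)) :=
  fun i j hij => disjoint_iff_inter_eq_empty.2 (hT i j hij).1

theorem pairwise_disjoint_towerDom (hT : EssDiff B T) :
    Pairwise (Disjoint on fun k => towerDom (T k)) :=
  fun i j hij => disjoint_iff_inter_eq_empty.2 (hT i j hij).2

theorem biUnion_mem_SelI_s13 (hT : EssDiff B T) {s : Set ℕ} {g : ℕ → Set (ℕ × ℕ)}
    (hgT : ∀ k ∈ s, g k ∈ T k) (hg : ∀ k ∈ s, IsPFunGraph (g k)) : (⋃ k ∈ s, g k) ∈ SelI :=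
  (IsPFunGraph.biUnion hg fun i hi j hj hij =>
    (hT.pairwise_disjoint_towerDom hij).mono (pdom_subset_towerDom (hgT i hi))
      (pdom_subset_towerDom (hgT j hj))).mem_SelI_s13

theorem finite_of_towerColors_inter_nonempty (hT : EssDiff B T) {s S : Set ℕ} (hS : S.Finite)
    (hs : ∀ k ∈ s, (towerColors B (T k) ∩ S).Nonempty) : s.Finite :=
  hS.finite_of_encard_le (encard_le_encard_of_pairwiseDisjoint_of_inter_nonempty
    (hT.pairwise_disjoint_towerColors.set_pairwise s) hs)

end EssDiff

theorem stmt13_general {B : ℕ → Set (ℕ × ℕ)} (hB : Pairwise (Disjoint on B))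
    (h : IsPJIdeal SelI (FinFinPart B)) {T : ℕ → Set (Set (ℕ × ℕ))}
    (hT : ∀ k : ℕ, ∃ lam : ℕ∞, (k : ℕ∞) ≤ lam ∧ IsMonoTower B ⊤ lam (T k)) :
    ¬ EssDiff B T := by
  intro hdiff
  choose lam hlam hT using hT
  choose g hgT hginj using fun k => (hT k).1.exists_injOn_Iio (hlam k)
  let row (i : ℕ) : Set (ℕ × ℕ) := ⋃ k ∈ Ioi i, g k i
  have hrow (i : ℕ) : row i ∈ SelI :=
    hdiff.biUnion_mem_SelI_s13 (fun k hk => hgT k hk) fun k hk => ((hT k).1.2.1 _ (hgT k hk)).1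
  obtain ⟨A, ⟨m, hm⟩, hA⟩ := h row hrow
  have hfin : (⋃ i ∈ Iio (m + 1), {n | ((row i \ A) ∩ B n).Infinite}).Finite :=
    (finite_Iio _).biUnion fun i _ => finite_setOf_infinite_inter_of_mem_FinFinPart hB (hA i)
  have hm_lt (n : ℕ) : (A ∩ Vert n).encard < (Iio (m + 1)).encard :=
    (hm n).trans_lt (by rw [encard_Iio_nat]; exact_mod_cast m.lt_succ_self)
  refine Ioi_infinite m (hdiff.finite_of_towerColors_inter_nonempty hfin fun k hk => ?_)
  have hsub : Iio (m + 1) ⊆ Iio k := Iio_subset_Iio hk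
  obtain ⟨i, hi, hinf⟩ := (hT k).1.exists_infinite_sdiff (finite_Iio _)
    ((hgT k).mono_left hsub) ((hginj k).mono hsub) hm_lt
  obtain ⟨c, hc⟩ := (hT k).2 _ (hgT k (hsub hi))
  refine ⟨c, ⟨_, hgT k (hsub hi), hc⟩, mem_biUnion hi (hinf.mono ?_)⟩
  exact subset_inter (sdiff_subset_sdiff_left (subset_biUnion_of_mem (u := (g · i)) (hsub hi)))
    (sdiff_subset.trans hc)

theorem stmt13 (B : ℕ → Set (ℕ × ℕ)) (hB : IsPartition B)
    (h : IsPJIdeal SelI (FinFinPart B)) :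
    ¬ ∃ T : ℕ → Set (Set (ℕ × ℕ)),
      (∀ k : ℕ, IsMonoTower B ⊤ (k : ℕ∞) (T k)) ∧ EssDiff B T := by
  rintro ⟨T, hT, hdiff⟩
  exact stmt13_general (fun i j hij => disjoint_iff_inter_eq_empty.2 (hB.2.1 i j hij)) h
    (fun k => ⟨k, le_rfl, hT k⟩) hdiff
end

section
/- Let B be a partition of ℕ×ℕ into infinitely many infinite sets. If Sel ⊥ Fin(B), then Fin×∅ ⊆ Fin(B); in particular V_n ∈ Fin(B) for every n ∈ ℕ. -/
open Set

section

variable {A B : ℕ → Set (ℕ × ℕ)} {X Y : Set (ℕ × ℕ)}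

theorem mem_finPart_of_finite (hX : X.Finite) : X ∈ FinPart B :=
  ⟨∅, hX.subset sdiff_subset⟩

theorem mem_finPart_of_subset (hY : Y ∈ FinPart B) (hXY : X ⊆ Y) : X ∈ FinPart B :=
  let ⟨F, hF⟩ := hY
  ⟨F, hF.subset (sdiff_subset_sdiff_left hXY)⟩

theorem union_mem_finPart (hX : X ∈ FinPart B) (hY : Y ∈ FinPart B) : X ∪ Y ∈ FinPart B := by
  obtain ⟨F, hF⟩ := hX
  obtain ⟨G, hG⟩ := hY
  refine ⟨F ∪ G, (hF.union hG).subset ?_⟩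
  rw [Finset.set_biUnion_union, union_sdiff_distrib]
  exact union_subset_union (sdiff_subset_sdiff_right subset_union_left)
    (sdiff_subset_sdiff_right subset_union_right)

theorem biUnion_mem_finPart {ι : Type*} {s : ι → Set (ℕ × ℕ)} (F : Finset ι)
    (h : ∀ i ∈ F, s i ∈ FinPart B) : ⋃ i ∈ F, s i ∈ FinPart B := by
  classical
  induction F using Finset.induction_on with
  | empty => exact mem_finPart_of_finite (by simp)
  | insert i F _ ih =>
    rw [Finset.set_biUnion_insert]
    exact union_mem_finPart (h i (F.mem_insert_self i))
      (ih fun j hj => h j (Finset.mem_insert_of_mem hj))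

theorem finPart_subset_finPart_of_forall_mem (h : ∀ n, A n ∈ FinPart B) :
    FinPart A ⊆ FinPart B := by
  rintro X ⟨F, hF⟩
  exact mem_finPart_of_subset
    (union_mem_finPart (mem_finPart_of_finite hF) (biUnion_mem_finPart F fun n _ => h n))
    (subset_sdiff_union X _)

theorem selPart_subset_oFinPart (A : ℕ → Set (ℕ × ℕ)) : SelPart A ⊆ OFinPart A :=
  fun _ ⟨_, hm⟩ n => finite_of_encard_le_coe (hm n)

theorem Orth.mono_left {α : Type*} {I I' J : Set (Set α)} (h : Orth I J) (hI : I ⊆ I') :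
    Orth I' J :=
  let ⟨S, hS, hSc⟩ := h
  ⟨S, hI hS, hSc⟩

theorem mem_finPart_of_orth_oFinPart (h : Orth (OFinPart A) (FinPart B)) (n : ℕ) :
    A n ∈ FinPart B := by
  obtain ⟨S, hS, hSc⟩ := h
  have inside : S ∩ A n ∈ FinPart B := mem_finPart_of_finite (hS n)
  have outside : A n \ S ∈ FinPart B := mem_finPart_of_subset hSc (sdiff_subset_compl _ _)
  rw [← inter_union_sdiff (A n) S, inter_comm]
  exact union_mem_finPart inside outside

theorem stmt15_general (h : Orth (OFinPart A) (FinPart B)) :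
    FinPart A ⊆ FinPart B ∧ ∀ n, A n ∈ FinPart B :=
  have members := mem_finPart_of_orth_oFinPart h
  ⟨finPart_subset_finPart_of_forall_mem members, members⟩

end

theorem stmt15 (B : ℕ → Set (ℕ × ℕ)) (hB : IsPartition B)
    (h : Orth SelI (FinPart B)) :
    FinVert ⊆ FinPart B ∧ ∀ n : ℕ, Vert n ∈ FinPart B :=
  stmt15_general (h.mono_left (selPart_subset_oFinPart Vert))
end
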